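/- Let f be a continuous 2π-periodic piecewise C¹ function, and let ρ be its limit covariance function. Then ρ(0) = ⟨f,f⟩, ρ'(0) = 0, and ρ''(0) = −(1/3)⟨f',f'⟩. -/

import Mathlib

open MeasureTheory Filter Set

noncomputable section

/-- Scalar product `⟨g,h⟩ := (1/2π)∫₀^{2π} g(t)h(t) dt`. -/
def iprod (g h : ℝ → ℝ) : ℝ :=
  (1 / (2 * Real.pi)) * ∫ t in (0:ℝ)..(2 * Real.pi), g t * h t

/-- Convolution `(g∗h)(x) := (1/2π)∫₀^{2π} g(u)h(x−u) du`. -/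
def conv (g h : ℝ → ℝ) (x : ℝ) : ℝ :=
  (1 / (2 * Real.pi)) * ∫ u in (0:ℝ)..(2 * Real.pi), g u * h (x - u)

/-- `f̌(x) := f(−x)`. -/
def checkFn (f : ℝ → ℝ) : ℝ → ℝ := fun x => f (-x)

/-- Limit covariance function: `ρ(u) := (1/u)∫₀^u (f∗f̌)(x) dx` for `u ≠ 0`,
`ρ(0) := ⟨f,f⟩`. -/
def rho (f : ℝ → ℝ) (u : ℝ) : ℝ :=
  if u = 0 then iprod f f else (1 / u) * ∫ x in (0:ℝ)..u, conv f (checkFn f) x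

/-- A continuous `2π`-periodic function which is piecewise `C¹` with a.e. derivative `f'`. -/
def IsPiecewiseC1 (f f' : ℝ → ℝ) : Prop :=
  Continuous f ∧ Function.Periodic f (2 * Real.pi) ∧
  ∃ S : Finset ℝ,
    (∀ x : ℝ, (∀ s ∈ S, ∀ k : ℤ, x ≠ s + 2 * Real.pi * k) → HasDerivAt f (f' x) x) ∧
    (∀ s ∈ S, (∃ L : ℝ, Tendsto f' (nhdsWithin s (Set.Iio s)) (nhds L)) ∧
              (∃ R : ℝ, Tendsto f' (nhdsWithin s (Set.Ioi s)) (nhds R)))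

/-!
Let `R = f ∗ f̌`, which is even and continuous. Then `ρ` is the difference quotient at `0` of
`F u = ∫₀^u R`, so `ρ` is even, whence `ρ'(0) = 0`. For `u ≠ 0` we have `u ρ'(u) = R u - ρ u`, and
l'Hôpital's rule turns this into `ρ''(0) = (2/3) lim (R x - R 0) / x²`, the existence of either side
being equivalent to that of the other.

By periodicity `R x - R 0 = -(1/4π) ∫₀^{2π} (f (t + x) - f t)² dt`, so everything reduces to
`∫₀^{2π} |(f (t + x) - f t) / x|² dt → ∫₀^{2π} |f' t|² dt` as `x → 0`. Fatou's lemma bounds the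
liminf from below. Conversely `f (t + x) - f t` is the integral of `f'` over an interval of length
`|x|`, so Jensen's inequality, Tonelli's theorem and periodicity bound the left side by the right
one for every single `x`. Both bounds hold in `[0, ∞]`, so `ρ'` is differentiable at `0` exactly
when `f'` is square integrable.
-/

open scoped Topology ENNReal

section Slope

theorem deriv_zero_of_even {V : Type*} [NormedAddCommGroup V] [NormedSpace ℝ V] {g : ℝ → V}
    (hg : Function.Even g) : deriv g 0 = 0 := by
  have h := deriv_comp_neg g (0 : ℝ)
  rw [show (fun x => g (-x)) = g from funext hg, neg_zero] at h
  have : IsAddTorsionFree V := .of_isTorsionFree ℝ V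
  exact self_eq_neg.mp h

theorem hasDerivAt_dslope_of_ne {𝕜 V : Type*} [NontriviallyNormedField 𝕜] [NormedAddCommGroup V]
    [NormedSpace 𝕜 V] {F : 𝕜 → V} {F' : V} {a u : 𝕜} (hF : HasDerivAt F F' u) (hu : u ≠ a) :
    HasDerivAt (dslope F a) ((u - a)⁻¹ • (F' - dslope F a u)) u := by
  have hG := ((differentiableAt_dslope_of_ne hu).mpr hF.differentiableAt).hasDerivAt
  have hprod := ((hasDerivAt_id u).sub_const a).smul hG
  simp only [Pi.smul_def', id, sub_smul_dslope, one_smul] at hprod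
  rwa [(hF.sub_const (F a)).unique hprod, add_sub_cancel_right,
    inv_smul_smul₀ (sub_ne_zero.mpr hu)]

theorem hasDerivAt_deriv_iff_tendsto_div {𝕜 : Type*} [NontriviallyNormedField 𝕜] {g : 𝕜 → 𝕜}
    {a c : 𝕜} (hg : deriv g a = 0) :
    HasDerivAt (deriv g) c a ↔ Tendsto (fun u => deriv g u / (u - a)) (𝓝[≠] a) (𝓝 c) := by
  rw [hasDerivAt_iff_tendsto_slope]
  refine tendsto_congr fun u => ?_
  rw [slope_def_field, hg, sub_zero]

variable {F R g : ℝ → ℝ} {a c : ℝ}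

theorem tendsto_sub_div_sub_pow_of_deriv {n : ℕ} (hga : ContinuousAt g a)
    (hg : ∀ᶠ u in 𝓝[≠] a, HasDerivAt g (R u) u)
    (hR : Tendsto (fun u => R u / (u - a) ^ n) (𝓝[≠] a) (𝓝 c)) :
    Tendsto (fun u => (g u - g a) / (u - a) ^ (n + 1)) (𝓝[≠] a) (𝓝 (c / (n + 1))) := by
  have hne : ∀ᶠ u in 𝓝[≠] a, u - a ≠ 0 :=
    eventually_mem_nhdsWithin.mono fun u hu => sub_ne_zero.mpr hu
  have hnum : Tendsto (fun u => g u - g a) (𝓝[≠] a) (𝓝 0) := by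
    simpa using (hga.tendsto.sub_const (g a)).mono_left nhdsWithin_le_nhds
  have hden : Tendsto (fun u => (u - a) ^ (n + 1)) (𝓝[≠] a) (𝓝 0) := by
    have hcont : Continuous fun u => (u - a) ^ (n + 1) := by fun_prop
    simpa using (hcont.tendsto a).mono_left nhdsWithin_le_nhds
  refine HasDerivAt.lhopital_zero_nhdsNE (f' := R) (g' := fun u => (n + 1) * (u - a) ^ n)
    (hg.mono fun u hu => hu.sub_const _)
    (.of_forall fun u => by simpa using ((hasDerivAt_id u).sub_const a).fun_pow (n + 1))
    (hne.mono fun u hu => mul_ne_zero n.cast_add_one_ne_zero (pow_ne_zero n hu)) hnum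
    hden ?_
  refine (hR.div_const (n + 1 : ℝ)).congr fun u => ?_
  rw [div_div, mul_comm]

theorem hasDerivAt_deriv_dslope_iff (hF : ∀ᶠ u in 𝓝 a, HasDerivAt F (R u) u)
    (hG : deriv (dslope F a) a = 0) :
    HasDerivAt (deriv (dslope F a)) c a ↔
      Tendsto (fun u => (R u - R a) / (u - a) ^ 2) (𝓝[≠] a) (𝓝 (3 / 2 * c)) := by
  have hFa : HasDerivAt F (R a) a := hF.self_of_nhds
  have hGa : dslope F a a = R a := (dslope_same F a).trans hFa.deriv
  have hG' : ∀ᶠ u in 𝓝[≠] a,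
      HasDerivAt (dslope F a) ((u - a)⁻¹ • (R u - dslope F a u)) u := by
    filter_upwards [hF.filter_mono nhdsWithin_le_nhds, self_mem_nhdsWithin] with u hu hua
    exact hasDerivAt_dslope_of_ne hu hua
  have hsplit : ∀ᶠ u in 𝓝[≠] a, (R u - R a) / (u - a) ^ 2 =
      (dslope F a u - dslope F a a) / (u - a) ^ 2 + deriv (dslope F a) u / (u - a) := by
    filter_upwards [hG', self_mem_nhdsWithin] with u hu hua
    have : u - a ≠ 0 := sub_ne_zero.mpr hua
    rw [hu.deriv, hGa, smul_eq_mul]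
    field_simp
    ring
  rw [hasDerivAt_deriv_iff_tendsto_div hG]
  constructor <;> intro h
  · have hlim := tendsto_sub_div_sub_pow_of_deriv (n := 1) (continuousAt_dslope_same.mpr
      hFa.differentiableAt) (hG'.mono fun u hu => hu.differentiableAt.hasDerivAt) (by simpa using h)
    refine ((hlim.add h).congr' (hsplit.mono fun u hu => hu.symm)).trans (le_of_eq ?_)
    congr 1
    norm_num
    ring
  · have hlim := tendsto_sub_div_sub_pow_of_deriv (n := 2) (g := fun u => F u - R a * (u - a))
      (hFa.continuousAt.sub (by fun_prop))
      ((hF.filter_mono nhdsWithin_le_nhds).mono fun u hu => hu.sub <| by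
        simpa using ((hasDerivAt_id u).sub_const a).const_mul (R a)) h
    refine ((h.sub hlim).congr' ?_).trans (le_of_eq ?_)
    · filter_upwards [hsplit, self_mem_nhdsWithin] with u hu hua
      have : u - a ≠ 0 := sub_ne_zero.mpr hua
      rw [hu, hGa, dslope_of_ne F hua, slope_def_field]
      field_simp
      ring
    · congr 1
      norm_num
      ring

end Slope

section DifferenceQuotient

theorem lintegral_enorm_rpow_le {α V : Type*} [MeasurableSpace α] [NormedAddCommGroup V]
    {μ : Measure α} {h : α → V} (hh : AEStronglyMeasurable h μ) {p : ℝ} (hp : 1 ≤ p) :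
    (∫⁻ t, ‖h t‖ₑ ∂μ) ^ p ≤ μ univ ^ (p - 1) * ∫⁻ t, ‖h t‖ₑ ^ p ∂μ := by
  have hp0 : 0 < p := one_pos.trans_le hp
  have hle := eLpNorm'_le_eLpNorm'_mul_rpow_measure_univ one_pos hp hh
  simp only [eLpNorm', ENNReal.rpow_one, div_one] at hle
  calc (∫⁻ t, ‖h t‖ₑ ∂μ) ^ p
      ≤ ((∫⁻ t, ‖h t‖ₑ ^ p ∂μ) ^ (1 / p) * μ univ ^ (1 - 1 / p)) ^ p := by gcongr
    _ = μ univ ^ (p - 1) * ∫⁻ t, ‖h t‖ₑ ^ p ∂μ := by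
      rw [ENNReal.mul_rpow_of_nonneg _ _ hp0.le, ← ENNReal.rpow_mul, ← ENNReal.rpow_mul,
        one_div_mul_cancel hp0.ne', ENNReal.rpow_one, sub_mul, one_mul,
        one_div_mul_cancel hp0.ne', mul_comm]

theorem ofReal_integral_norm_rpow {V : Type*} [NormedAddCommGroup V] {h : ℝ → V} {T p : ℝ}
    (hp : 0 ≤ p) (hT : 0 ≤ T)
    (hh : IntervalIntegrable (fun t => ‖h t‖ ^ p) volume 0 T) :
    ENNReal.ofReal (∫ t in 0..T, ‖h t‖ ^ p) = ∫⁻ t in Ioc 0 T, ‖h t‖ₑ ^ p := by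
  rw [intervalIntegral.integral_of_le hT, ofReal_integral_eq_lintegral_ofReal hh.1
    (.of_forall fun t => by positivity)]
  simp only [← ENNReal.ofReal_rpow_of_nonneg (norm_nonneg _) hp, ofReal_norm]

theorem setLIntegral_Ioc_add_of_periodic {φ : ℝ → ℝ≥0∞} {T : ℝ} (hφ : Function.Periodic φ T)
    (hT : 0 < T) (s : ℝ) : ∫⁻ t in Ioc 0 T, φ (t + s) = ∫⁻ t in Ioc 0 T, φ t := by
  have : VAddInvariantMeasure (AddSubgroup.zmultiples T) ℝ volume :=
    ⟨fun c s _ => measure_preimage_add _ _ _⟩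
  have hshift := (measurePreserving_add_right volume s).setLIntegral_comp_preimage_emb
    (measurableEmbedding_addRight s) φ (Ioc s (s + T))
  rw [preimage_add_const_Ioc, sub_self, add_sub_cancel_left] at hshift
  have hdomain := (isAddFundamentalDomain_Ioc hT s).setLIntegral_eq
    (isAddFundamentalDomain_Ioc hT 0) φ hφ.map_vadd_zmultiples
  rw [zero_add] at hdomain
  exact hshift.trans hdomain

theorem periodic_deriv {V : Type*} [NormedAddCommGroup V] [NormedSpace ℝ V] {f : ℝ → V} {T : ℝ}
    (hf : Function.Periodic f T) : Function.Periodic (deriv f) T := fun t => by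
  rw [← deriv_comp_add_const, funext hf]

variable {V : Type*} [NormedAddCommGroup V] [NormedSpace ℝ V] {f : ℝ → V} {E : Set ℝ} {T p : ℝ}

theorem lintegral_deriv_le_liminf_lintegral_diffQuot (hf : Continuous f) (hE : E.Countable)
    (hd : ∀ t ∉ E, DifferentiableAt ℝ f t) (μ : Measure ℝ) [NullSingletonClass μ] (p : ℝ) :
    ∫⁻ t, ‖deriv f t‖ₑ ^ p ∂μ ≤
      liminf (fun x => ∫⁻ t, ‖x⁻¹ • (f (t + x) - f t)‖ₑ ^ p ∂μ) (𝓝[≠] 0) := by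
  calc ∫⁻ t, ‖deriv f t‖ₑ ^ p ∂μ
      = ∫⁻ t, liminf (fun x => ‖x⁻¹ • (f (t + x) - f t)‖ₑ ^ p) (𝓝[≠] 0) ∂μ := by
        refine lintegral_congr_ae ?_
        filter_upwards [hE.ae_notMem μ] with t ht
        exact ((hd t ht).hasDerivAt.tendsto_slope_zero.enorm.ennrpow_const p).liminf_eq.symm
    _ ≤ liminf (fun x => ∫⁻ t, ‖x⁻¹ • (f (t + x) - f t)‖ₑ ^ p ∂μ) (𝓝[≠] 0) :=
        lintegral_liminf_le fun x => Measurable.pow_const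
          (Continuous.measurable (by fun_prop)) p

variable [CompleteSpace V]

theorem measurable_enorm_deriv_rpow (f : ℝ → V) (p : ℝ) : Measurable fun t => ‖deriv f t‖ₑ ^ p :=
  (stronglyMeasurable_deriv f).enorm.pow_const p

theorem enorm_sub_le_lintegral_deriv (hf : Continuous f) (hE : E.Countable)
    (hd : ∀ t ∉ E, DifferentiableAt ℝ f t) (a b : ℝ) :
    ‖f b - f a‖ₑ ≤ ∫⁻ t in uIoc a b, ‖deriv f t‖ₑ := by
  by_cases hfin : ∫⁻ t in uIoc a b, ‖deriv f t‖ₑ = ∞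
  · exact hfin ▸ le_top
  have hint : IntervalIntegrable (deriv f) volume a b :=
    intervalIntegrable_iff.mpr ⟨aestronglyMeasurable_deriv f _, lt_top_iff_ne_top.mpr hfin⟩
  rw [← integral_eq_of_hasDerivAt_off_countable f (deriv f) hE hf.continuousOn
    (fun t ht => (hd t ht.2).hasDerivAt) hint, ← enorm_norm,
    intervalIntegral.norm_intervalIntegral_eq, enorm_norm]
  exact enorm_integral_le_lintegral_enorm _

theorem enorm_sub_rpow_le_lintegral_deriv (hf : Continuous f) (hE : E.Countable)
    (hd : ∀ t ∉ E, DifferentiableAt ℝ f t) (hp : 1 ≤ p) (t x : ℝ) :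
    ‖f (t + x) - f t‖ₑ ^ p ≤ ‖x‖ₑ ^ (p - 1) * ∫⁻ s in uIoc 0 x, ‖deriv f (t + s)‖ₑ ^ p := by
  have hshift : ‖f (t + x) - f t‖ₑ ≤ ∫⁻ s in uIoc 0 x, ‖deriv f (t + s)‖ₑ := by
    simpa only [deriv_comp_const_add, add_zero] using
      enorm_sub_le_lintegral_deriv (f := fun s => f (t + s)) (E := (t + ·) ⁻¹' E) (by fun_prop)
        (hE.preimage (add_right_injective t))
        (fun s hs => (hd (t + s) hs).comp s (by fun_prop)) 0 x
  have hmeas : AEStronglyMeasurable (fun s => deriv f (t + s)) (volume.restrict (uIoc 0 x)) :=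
    ((stronglyMeasurable_deriv f).comp_measurable (measurable_const_add t)).aestronglyMeasurable
  calc ‖f (t + x) - f t‖ₑ ^ p
      ≤ (∫⁻ s in uIoc 0 x, ‖deriv f (t + s)‖ₑ) ^ p := by gcongr
    _ ≤ ‖x‖ₑ ^ (p - 1) * ∫⁻ s in uIoc 0 x, ‖deriv f (t + s)‖ₑ ^ p := by
      simpa only [Measure.restrict_apply_univ, Real.volume_uIoc, sub_zero,
        ← Real.enorm_eq_ofReal_abs] using
        lintegral_enorm_rpow_le hmeas hp

theorem lintegral_enorm_sub_rpow_le (hf : Continuous f) (hper : Function.Periodic f T)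
    (hT : 0 < T) (hE : E.Countable) (hd : ∀ t ∉ E, DifferentiableAt ℝ f t) (hp : 1 ≤ p) (x : ℝ) :
    ∫⁻ t in Ioc 0 T, ‖f (t + x) - f t‖ₑ ^ p ≤ ‖x‖ₑ ^ p * ∫⁻ t in Ioc 0 T, ‖deriv f t‖ₑ ^ p := by
  have hmeas := measurable_enorm_deriv_rpow f p
  have hper' : Function.Periodic (fun t => ‖deriv f t‖ₑ ^ p) T := fun t => by
    simp only [periodic_deriv hper t]
  calc ∫⁻ t in Ioc 0 T, ‖f (t + x) - f t‖ₑ ^ p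
      ≤ ∫⁻ t in Ioc 0 T, ‖x‖ₑ ^ (p - 1) * ∫⁻ s in uIoc 0 x, ‖deriv f (t + s)‖ₑ ^ p :=
        lintegral_mono fun t => enorm_sub_rpow_le_lintegral_deriv hf hE hd hp t x
    _ = ‖x‖ₑ ^ (p - 1) * ∫⁻ s in uIoc 0 x, ∫⁻ t in Ioc 0 T, ‖deriv f (t + s)‖ₑ ^ p := by
        rw [lintegral_const_mul' _ _ (by finiteness), lintegral_lintegral_swap]
        exact (hmeas.comp (measurable_fst.add measurable_snd)).aemeasurable
    _ = ‖x‖ₑ ^ (p - 1) * ‖x‖ₑ ^ (1 : ℝ) * ∫⁻ t in Ioc 0 T, ‖deriv f t‖ₑ ^ p := by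
        simp only [setLIntegral_Ioc_add_of_periodic hper' hT, setLIntegral_const, Real.volume_uIoc,
          sub_zero, ← Real.enorm_eq_ofReal_abs, ENNReal.rpow_one]
        ring
    _ = ‖x‖ₑ ^ p * ∫⁻ t in Ioc 0 T, ‖deriv f t‖ₑ ^ p := by
        rw [← ENNReal.rpow_add_of_nonneg _ _ (sub_nonneg.mpr hp) zero_le_one, sub_add_cancel]

theorem tendsto_lintegral_diffQuot (hf : Continuous f) (hper : Function.Periodic f T)
    (hT : 0 < T) (hE : E.Countable) (hd : ∀ t ∉ E, DifferentiableAt ℝ f t) (hp : 1 ≤ p) :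
    Tendsto (fun x => ∫⁻ t in Ioc 0 T, ‖x⁻¹ • (f (t + x) - f t)‖ₑ ^ p) (𝓝[≠] 0)
      (𝓝 (∫⁻ t in Ioc 0 T, ‖deriv f t‖ₑ ^ p)) := by
  have hp0 : 0 ≤ p := zero_le_one.trans hp
  refine tendsto_of_le_liminf_of_limsup_le
    (lintegral_deriv_le_liminf_lintegral_diffQuot hf hE hd _ p) (limsup_le_of_le ?_ ?_)
  · isBoundedDefault
  filter_upwards [self_mem_nhdsWithin] with x hx
  have hcancel : ‖x⁻¹‖ₑ ^ p * ‖x‖ₑ ^ p = 1 := by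
    rw [← ENNReal.mul_rpow_of_nonneg _ _ hp0, ← enorm_mul, inv_mul_cancel₀ hx, enorm_one,
      ENNReal.one_rpow]
  simp only [enorm_smul, ENNReal.mul_rpow_of_nonneg _ _ hp0]
  rw [lintegral_const_mul' _ _ (by finiteness)]
  calc ‖x⁻¹‖ₑ ^ p * ∫⁻ t in Ioc 0 T, ‖f (t + x) - f t‖ₑ ^ p
      ≤ ‖x⁻¹‖ₑ ^ p * (‖x‖ₑ ^ p * ∫⁻ t in Ioc 0 T, ‖deriv f t‖ₑ ^ p) := by
        gcongr
        exact lintegral_enorm_sub_rpow_le hf hper hT hE hd hp x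
    _ = ∫⁻ t in Ioc 0 T, ‖deriv f t‖ₑ ^ p := by rw [← mul_assoc, hcancel, one_mul]

theorem tendsto_integral_diffQuot_iff (hf : Continuous f) (hper : Function.Periodic f T)
    (hT : 0 < T) (hE : E.Countable) (hd : ∀ t ∉ E, DifferentiableAt ℝ f t) (hp : 1 ≤ p) {a : ℝ} :
    Tendsto (fun x => ∫ t in 0..T, ‖x⁻¹ • (f (t + x) - f t)‖ ^ p) (𝓝[≠] 0) (𝓝 a) ↔
      IntervalIntegrable (fun t => ‖deriv f t‖ ^ p) volume 0 T ∧
        ∫ t in 0..T, ‖deriv f t‖ ^ p = a := by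
  have hp0 : 0 ≤ p := zero_le_one.trans hp
  have hlim := tendsto_lintegral_diffQuot hf hper hT hE hd hp
  have hnonneg : ∀ h : ℝ → V, 0 ≤ ∫ t in 0..T, ‖h t‖ ^ p := fun h =>
    intervalIntegral.integral_nonneg hT.le fun t _ => by positivity
  have hquot (x : ℝ) : ENNReal.ofReal (∫ t in 0..T, ‖x⁻¹ • (f (t + x) - f t)‖ ^ p) =
      ∫⁻ t in Ioc 0 T, ‖x⁻¹ • (f (t + x) - f t)‖ₑ ^ p :=
    ofReal_integral_norm_rpow hp0 hT.le <| Continuous.intervalIntegrable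
      (Continuous.rpow_const (by fun_prop) fun _ => .inr hp0) _ _
  simp only [← hquot] at hlim
  constructor
  · intro h
    have hsq := tendsto_nhds_unique hlim (ENNReal.tendsto_ofReal h)
    have hint : IntervalIntegrable (fun t => ‖deriv f t‖ ^ p) volume 0 T := by
      rw [intervalIntegrable_iff_integrableOn_Ioc_of_le hT.le]
      refine ⟨((stronglyMeasurable_deriv f).norm.measurable.pow_const p).aestronglyMeasurable, ?_⟩
      rw [hasFiniteIntegral_iff_ofReal (.of_forall fun t => by positivity)]
      simp only [← ENNReal.ofReal_rpow_of_nonneg (norm_nonneg _) hp0, ofReal_norm, hsq]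
      exact ENNReal.ofReal_lt_top
    refine ⟨hint, ?_⟩
    rwa [← ofReal_integral_norm_rpow hp0 hT.le hint, ENNReal.ofReal_eq_ofReal_iff (hnonneg _)
      (ge_of_tendsto' h fun x => hnonneg _)] at hsq
  · rintro ⟨hint, rfl⟩
    rw [← ofReal_integral_norm_rpow hp0 hT.le hint] at hlim
    simpa only [Function.comp_def, ENNReal.toReal_ofReal (hnonneg _)] using
      (ENNReal.tendsto_toReal ENNReal.ofReal_ne_top).comp hlim

end DifferenceQuotient

section Covariance

variable {f f' : ℝ → ℝ} {E : Set ℝ} {c : ℝ}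

theorem intervalIntegral_add_of_periodic {V : Type*} [NormedAddCommGroup V] [NormedSpace ℝ V]
    {φ : ℝ → V} {T : ℝ} (hφ : Function.Periodic φ T) (s : ℝ) :
    ∫ t in 0..T, φ (t + s) = ∫ t in 0..T, φ t := by
  rw [intervalIntegral.integral_comp_add_right, zero_add, add_comm T s,
    hφ.intervalIntegral_add_eq s 0, zero_add]

theorem conv_checkFn_apply (f : ℝ → ℝ) (x : ℝ) :
    conv f (checkFn f) x = 1 / (2 * Real.pi) * ∫ t in 0..2 * Real.pi, f t * f (t - x) := by
  simp only [conv, checkFn, neg_sub]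

theorem conv_checkFn_apply_add (hper : Function.Periodic f (2 * Real.pi)) (x : ℝ) :
    conv f (checkFn f) x = 1 / (2 * Real.pi) * ∫ t in 0..2 * Real.pi, f (t + x) * f t := by
  have hprod : Function.Periodic (fun t => f t * f (t - x)) (2 * Real.pi) :=
    hper.mul (hper.sub_const x)
  rw [conv_checkFn_apply, ← intervalIntegral_add_of_periodic hprod x]
  simp only [add_sub_cancel_right]

theorem conv_checkFn_zero (f : ℝ → ℝ) : conv f (checkFn f) 0 = iprod f f := by
  simp only [conv_checkFn_apply, iprod, sub_zero]

theorem even_conv_checkFn (hper : Function.Periodic f (2 * Real.pi)) :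
    Function.Even (conv f (checkFn f)) := fun x => by
  simp only [conv_checkFn_apply_add hper x, conv_checkFn_apply f (-x), sub_neg_eq_add, mul_comm]

theorem continuous_conv_checkFn (hf : Continuous f) : Continuous (conv f (checkFn f)) := by
  rw [funext (conv_checkFn_apply f)]
  exact continuous_const.mul
    (intervalIntegral.continuous_parametric_intervalIntegral_of_continuous' (by fun_prop) _ _)

theorem conv_checkFn_sub_conv_checkFn_zero (hf : Continuous f)
    (hper : Function.Periodic f (2 * Real.pi)) (x : ℝ) :
    conv f (checkFn f) x - conv f (checkFn f) 0 =
      -(1 / (4 * Real.pi)) * ∫ t in 0..2 * Real.pi, (f (t + x) - f t) ^ 2 := by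
  have hsq : ∫ t in 0..2 * Real.pi, f (t + x) ^ 2 = ∫ t in 0..2 * Real.pi, f t ^ 2 :=
    intervalIntegral_add_of_periodic (φ := fun t => f t ^ 2) (fun t => by simp only [hper t]) x
  have hexpand : ∫ t in 0..2 * Real.pi, (f (t + x) - f t) ^ 2 =
      2 * (∫ t in 0..2 * Real.pi, f t ^ 2) - 2 * ∫ t in 0..2 * Real.pi, f (t + x) * f t := by
    rw [two_mul (∫ t in 0..2 * Real.pi, f t ^ 2)]
    nth_rw 1 [← hsq]
    rw [← intervalIntegral.integral_const_mul, ← intervalIntegral.integral_add,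
      ← intervalIntegral.integral_sub]
    · congr! 2 with t
      ring
    all_goals exact Continuous.intervalIntegrable (by fun_prop) _ _
  rw [hexpand, conv_checkFn_apply_add hper x, conv_checkFn_apply_add hper 0]
  simp only [add_zero, ← sq]
  field_simp
  ring

theorem rho_zero (f : ℝ → ℝ) : rho f 0 = iprod f f := if_pos rfl

theorem hasDerivAt_integral_conv_checkFn (hf : Continuous f) (u : ℝ) :
    HasDerivAt (fun u => ∫ x in 0..u, conv f (checkFn f) x) (conv f (checkFn f) u) u :=
  ((continuous_conv_checkFn hf).integral_hasStrictDerivAt 0 u).hasDerivAt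

theorem rho_eq_dslope (hf : Continuous f) :
    rho f = dslope (fun u => ∫ x in 0..u, conv f (checkFn f) x) 0 := by
  funext u
  obtain rfl | hu := eq_or_ne u 0
  · rw [rho_zero, dslope_same, (hasDerivAt_integral_conv_checkFn hf 0).deriv, conv_checkFn_zero]
  · simp [rho, hu, dslope_of_ne _ hu, slope_def_field, div_eq_inv_mul]

theorem even_rho (hper : Function.Periodic f (2 * Real.pi)) : Function.Even (rho f) := by
  intro u
  have hodd : ∫ x in 0..-u, conv f (checkFn f) x = -∫ x in 0..u, conv f (checkFn f) x := by
    rw [← intervalIntegral.integral_symm, ← neg_zero (G := ℝ),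
      ← intervalIntegral.integral_comp_neg, neg_zero]
    simp only [even_conv_checkFn hper _]
  simp only [rho, neg_eq_zero, hodd]
  congr 1
  ring

theorem deriv_rho_zero (hper : Function.Periodic f (2 * Real.pi)) : deriv (rho f) 0 = 0 :=
  deriv_zero_of_even (even_rho hper)

theorem conv_checkFn_sub_div_sq (hf : Continuous f) (hper : Function.Periodic f (2 * Real.pi))
    (x : ℝ) : (conv f (checkFn f) x - conv f (checkFn f) 0) / (x - 0) ^ 2 =
      -(1 / (4 * Real.pi)) *
        ∫ t in 0..2 * Real.pi, ‖x⁻¹ • (f (t + x) - f t)‖ ^ (2 : ℝ) := by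
  simp only [conv_checkFn_sub_conv_checkFn_zero hf hper, smul_eq_mul, Real.rpow_two,
    Real.norm_eq_abs, sq_abs, mul_pow, intervalIntegral.integral_const_mul, sub_zero]
  ring

theorem hasDerivAt_deriv_rho_zero_iff (hf : Continuous f)
    (hper : Function.Periodic f (2 * Real.pi)) (hE : E.Countable)
    (hd : ∀ t ∉ E, DifferentiableAt ℝ f t) :
    HasDerivAt (deriv (rho f)) c 0 ↔
      IntervalIntegrable (fun t => deriv f t ^ 2) volume 0 (2 * Real.pi) ∧
        c = -(1 / 3) * iprod (deriv f) (deriv f) := by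
  have hzero := deriv_rho_zero hper
  rw [rho_eq_dslope hf] at hzero ⊢
  rw [hasDerivAt_deriv_dslope_iff (.of_forall (hasDerivAt_integral_conv_checkFn hf)) hzero]
  simp only [conv_checkFn_sub_div_sq hf hper]
  have hconst : -(1 / (4 * Real.pi)) ≠ 0 := by simp [Real.pi_ne_zero]
  rw [show 3 / 2 * c = -(1 / (4 * Real.pi)) * (-(6 * Real.pi) * c) by field_simp; ring]
  refine (tendsto_const_smul_iff₀ hconst).trans ?_
  rw [tendsto_integral_diffQuot_iff hf hper Real.two_pi_pos hE hd one_le_two]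
  simp only [Real.rpow_two, Real.norm_eq_abs, sq_abs, iprod, ← sq]
  refine and_congr_right fun _ => ⟨fun h => ?_, fun h => ?_⟩
  · rw [h]
    field_simp
    ring
  · rw [h]
    field_simp
    ring

theorem statement9_general (hf : Continuous f) (hper : Function.Periodic f (2 * Real.pi))
    (hE : E.Countable) (hd : ∀ t ∉ E, HasDerivAt f (f' t) t) :
    rho f 0 = iprod f f ∧
    deriv (rho f) 0 = 0 ∧
    deriv (deriv (rho f)) 0 = -(1 / 3) * iprod f' f' := by
  have hiprod : iprod f' f' = iprod (deriv f) (deriv f) := by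
    unfold iprod
    congr 1
    refine intervalIntegral.integral_congr_ae ?_
    filter_upwards [hE.ae_notMem volume] with t ht _
    rw [(hd t ht).deriv]
  have hiff {c : ℝ} := hasDerivAt_deriv_rho_zero_iff (c := c) hf hper hE
    fun t ht => (hd t ht).differentiableAt
  refine ⟨rho_zero f, deriv_rho_zero hper, ?_⟩
  rw [hiprod]
  by_cases hint : IntervalIntegrable (fun t => deriv f t ^ 2) volume 0 (2 * Real.pi)
  · exact (hiff.mpr ⟨hint, rfl⟩).deriv
  -- Here `deriv (rho f)` is not differentiable at `0`, and both sides are the junk value `0`.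
  · rw [deriv_zero_of_not_differentiableAt fun h => hint (hiff.mp h.hasDerivAt).1]
    simp only [iprod, ← sq, intervalIntegral.integral_undef hint, mul_zero]

theorem IsPiecewiseC1.exists_countable_hasDerivAt (hf : IsPiecewiseC1 f f') :
    ∃ E : Set ℝ, E.Countable ∧ ∀ t ∉ E, HasDerivAt f (f' t) t := by
  obtain ⟨-, -, S, hd, -⟩ := hf
  refine ⟨⋃ s ∈ S, range fun k : ℤ => s + 2 * Real.pi * k,
    S.countable_toSet.biUnion fun s _ => countable_range _, fun t ht => hd t ?_⟩
  rintro s hs k rfl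
  exact ht (mem_iUnion₂.mpr ⟨s, hs, k, rfl⟩)

end Covariance

theorem statement9 (f f' : ℝ → ℝ) (hf : IsPiecewiseC1 f f') :
    rho f 0 = iprod f f ∧
    deriv (rho f) 0 = 0 ∧
    deriv (deriv (rho f)) 0 = -(1 / 3) * iprod f' f' := by
  obtain ⟨E, hE, hd⟩ := hf.exists_countable_hasDerivAt
  exact statement9_general hf.1 hf.2.1 hE hd

end
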